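/- Fix 0 < r < 1 and 0 ≤ α < 1, and set r(T) := r/T^α (assume T large enough that r(T) ∈ (0,1)). Let p^{(T)}_T be the law at time T of the lazy random walk with rate r(T). Then L_T/√(T^{1−α}) converges weakly to the normal distribution N(0, r); concretely, for every bounded continuous function g : ℝ → ℝ, Σ_{x∈ℤ} p^{(T)}_T(x) · g(x/√(T^{1−α})) → (1/√(2πr)) ∫_ℝ g(x) e^{−x²/(2r)} dx as T → ∞. -/

import Mathlib

open scoped Real
open Filter Topology

/-- The lazy random walk on `ℤ` with movement rate `r`: probability mass function
at time `m`, started at the origin. -/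
noncomputable def lazyRW (r : ℝ) : ℕ → ℤ → ℝ
  | 0, x => if x = 0 then 1 else 0
  | m + 1, x =>
      (1 - r) * lazyRW r m x + (r / 2) * (lazyRW r m (x - 1) + lazyRW r m (x + 1))

open MeasureTheory ProbabilityTheory

lemma lazyRW_nonneg (r : ℝ) (h0 : 0 ≤ r) (h1 : r ≤ 1) (m : ℕ) (x : ℤ) : 0 ≤ lazyRW r m x := by
  induction m generalizing x with
  | zero => simp only [lazyRW]; split_ifs <;> norm_num
  | succ m ih =>
    simp only [lazyRW]
    have := ih x
    have := ih (x - 1)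
    have := ih (x + 1)
    have : 0 ≤ 1 - r := by linarith
    positivity

lemma lazyRW_hasSum (r t : ℝ) (m : ℕ) :
    HasSum (fun x : ℤ => (lazyRW r m x : ℂ) * Complex.exp (t * x * Complex.I))
      (((1 - r + r * Real.cos t) ^ m : ℝ) : ℂ) := by
  induction m with
  | zero =>
    have h := hasSum_ite_eq (0 : ℤ) (1 : ℂ)
    convert h using 1
    · funext x
      simp only [lazyRW]
      split_ifs with hx
      · simp [hx]
      · simp
    · simp
  | succ m ih =>
    have hl := ((Equiv.subRight (1 : ℤ)).hasSum_iff.2 ih).mul_left (Complex.exp (t * Complex.I))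
    have hr := ((Equiv.addRight (1 : ℤ)).hasSum_iff.2 ih).mul_left (Complex.exp (-t * Complex.I))
    have h := (ih.mul_left (1 - r : ℂ)).add ((hl.add hr).mul_left (r / 2 : ℂ))
    convert h using 1
    · rfl
    · funext x
      have e1 : Complex.exp (t * x * Complex.I)
          = Complex.exp (t * Complex.I) * Complex.exp (t * ((x - 1 : ℤ) : ℂ) * Complex.I) := by
        rw [← Complex.exp_add]; congr 1; push_cast; ring
      have e2 : Complex.exp (t * x * Complex.I)
          = Complex.exp (-t * Complex.I) * Complex.exp (t * ((x + 1 : ℤ) : ℂ) * Complex.I) := by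
        rw [← Complex.exp_add]; congr 1; push_cast; ring
      simp only [lazyRW, Function.comp, Equiv.subRight_apply, Equiv.coe_addRight]
      rw [mul_left_comm (Complex.exp (t * Complex.I)), ← e1,
        mul_left_comm (Complex.exp (-t * Complex.I)), ← e2]
      push_cast
      ring
    · have hc := Complex.two_cos (t : ℂ)
      push_cast
      rw [pow_succ]
      linear_combination (r / 2 * (1 - r + r * Complex.cos t) ^ m : ℂ) * hc

lemma lazyRW_hasSum_one (r : ℝ) (m : ℕ) : HasSum (fun x : ℤ => lazyRW r m x) 1 := by
  have h := lazyRW_hasSum r 0 m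
  rw [← Complex.hasSum_ofReal]
  simpa using h

/-- law of the walk as a PMF -/
noncomputable def lazyPMF (r : ℝ) (h0 : 0 ≤ r) (h1 : r ≤ 1) (m : ℕ) : PMF ℤ :=
  ⟨fun x => ENNReal.ofReal (lazyRW r m x), by
    have h := lazyRW_hasSum_one r m
    have h2 := ENNReal.ofReal_tsum_of_nonneg (lazyRW_nonneg r h0 h1 m) h.summable
    rw [h.tsum_eq, ENNReal.ofReal_one] at h2
    rw [h2]
    exact ENNReal.summable.hasSum⟩

lemma lazyPMF_toReal (r : ℝ) (h0 : 0 ≤ r) (h1 : r ≤ 1) (m : ℕ) (x : ℤ) :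
    (lazyPMF r h0 h1 m x).toReal = lazyRW r m x :=
  ENNReal.toReal_ofReal (lazyRW_nonneg r h0 h1 m x)

lemma lazyPMF_integral {E : Type*} [NormedAddCommGroup E] [NormedSpace ℝ E] [CompleteSpace E]
    (r : ℝ) (h0 : 0 ≤ r) (h1 : r ≤ 1) (m : ℕ) (f : ℤ → E) (M : ℝ) (hM : ∀ x, ‖f x‖ ≤ M) :
    ∫ x, f x ∂(lazyPMF r h0 h1 m).toMeasure = ∑' x, lazyRW r m x • f x := by
  rw [PMF.integral_eq_tsum]
  · simp only [lazyPMF_toReal]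
  · exact Integrable.of_bound StronglyMeasurable.of_discrete.aestronglyMeasurable M (.of_forall hM)

/-- law of the rescaled walk -/
noncomputable def lazyPM (r : ℝ) (h0 : 0 ≤ r) (h1 : r ≤ 1) (m : ℕ) (s : ℝ) :
    ProbabilityMeasure ℝ :=
  ⟨(lazyPMF r h0 h1 m).toMeasure.map (fun x : ℤ => (x : ℝ) / s),
    Measure.isProbabilityMeasure_map (measurable_of_countable _).aemeasurable⟩

lemma lazyPM_integral {E : Type*} [NormedAddCommGroup E] [NormedSpace ℝ E] [CompleteSpace E]
    (r : ℝ) (h0 : 0 ≤ r) (h1 : r ≤ 1) (m : ℕ) (s : ℝ) (f : ℝ → E)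
    (hf : StronglyMeasurable f) (M : ℝ) (hM : ∀ x, ‖f x‖ ≤ M) :
    ∫ x, f x ∂(lazyPM r h0 h1 m s : Measure ℝ) = ∑' x : ℤ, lazyRW r m x • f (x / s) := by
  change ∫ x, f x ∂((lazyPMF r h0 h1 m).toMeasure.map (fun x : ℤ => (x : ℝ) / s)) = _
  rw [integral_map (measurable_of_countable _).aemeasurable hf.aestronglyMeasurable]
  exact lazyPMF_integral r h0 h1 m _ M (fun x => hM _)

lemma lazyPM_charFun (r : ℝ) (h0 : 0 ≤ r) (h1 : r ≤ 1) (m : ℕ) (s t : ℝ) :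
    charFun (lazyPM r h0 h1 m s : Measure ℝ) t
      = (((1 - r + r * Real.cos (t / s)) ^ m : ℝ) : ℂ) := by
  rw [charFun_apply_real, lazyPM_integral r h0 h1 m s _ _ 1]
  · rw [← (lazyRW_hasSum r (t / s) m).tsum_eq]
    refine tsum_congr fun x => ?_
    rw [Complex.real_smul]
    congr 2
    push_cast
    ring
  · intro x
    rw [← Complex.ofReal_mul, Complex.norm_exp_ofReal_mul_I]
  · exact Continuous.stronglyMeasurable (by fun_prop)

lemma one_sub_cos_eq_sinc (y : ℝ) : 1 - Real.cos y = y ^ 2 / 2 * Real.sinc (y / 2) ^ 2 := by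
  by_cases hy : y = 0
  · simp [hy]
  · rw [Real.sinc_of_ne_zero (by positivity)]
    have h := Real.cos_sq_add_sin_sq (y / 2)
    have h2 := Real.cos_two_mul (y / 2)
    rw [show 2 * (y / 2) = y by ring] at h2
    field_simp
    linarith

lemma charFun_limit (r α t : ℝ) (hα1 : α < 1) :
    Tendsto (fun T : ℕ => (1 - r / (T : ℝ) ^ α + r / (T : ℝ) ^ α *
      Real.cos (t / Real.sqrt ((T : ℝ) ^ (1 - α)))) ^ T) atTop
      (𝓝 (Real.exp (-(r * t ^ 2 / 2)))) := by
  have hs : Tendsto (fun T : ℕ => Real.sqrt ((T : ℝ) ^ (1 - α))) atTop atTop :=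
    Real.tendsto_sqrt_atTop.comp
      ((tendsto_rpow_atTop (by linarith)).comp tendsto_natCast_atTop_atTop)
  have hy : Tendsto (fun T : ℕ => t / Real.sqrt ((T : ℝ) ^ (1 - α)) / 2) atTop (𝓝 0) := by
    simpa using (hs.const_div_atTop t).div_const 2
  have hsinc : Tendsto (fun T : ℕ => -(r * t ^ 2 / 2 *
      Real.sinc (t / Real.sqrt ((T : ℝ) ^ (1 - α)) / 2) ^ 2)) atTop
      (𝓝 (-(r * t ^ 2 / 2))) := by
    have h := (Real.continuous_sinc.tendsto 0).comp hy
    rw [Real.sinc_zero] at h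
    simpa using ((h.pow 2).const_mul (r * t ^ 2 / 2)).neg
  have key := Real.tendsto_one_add_pow_exp_of_tendsto
    (g := fun T : ℕ => -(r / (T : ℝ) ^ α *
      (1 - Real.cos (t / Real.sqrt ((T : ℝ) ^ (1 - α)))))) (hsinc.congr' ?_)
  · refine key.congr fun T => ?_
    congr 1
    ring
  · filter_upwards [eventually_gt_atTop 0] with T hT
    have hT' : (0 : ℝ) < T := by exact_mod_cast hT
    rw [one_sub_cos_eq_sinc, div_pow, Real.sq_sqrt (by positivity),
      Real.rpow_sub hT', Real.rpow_one]
    have := Real.rpow_pos_of_pos hT' α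
    field_simp

/-- Crossover regime `r(T) = r / T^α`, `0 ≤ α < 1`: the lazy random walk satisfies
`L_T / √(T^{1-α}) ⇒ N(0, r)`. -/
theorem lazy_rw_crossover_gaussian (r α : ℝ) (hr0 : 0 < r) (hr1 : r < 1)
    (hα0 : 0 ≤ α) (hα1 : α < 1) :
    ∀ g : ℝ → ℝ, Continuous g → (∃ M : ℝ, ∀ x : ℝ, |g x| ≤ M) →
      Tendsto
        (fun T : ℕ =>
          ∑' x : ℤ, lazyRW (r / (T : ℝ) ^ α) T x * g ((x : ℝ) / Real.sqrt ((T : ℝ) ^ (1 - α))))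
        atTop
        (𝓝 ((1 / Real.sqrt (2 * π * r)) * ∫ x : ℝ, g x * Real.exp (-x ^ 2 / (2 * r)))) := by
  intro g hg ⟨M, hM⟩
  have hT : ∀ T : ℕ, 0 ≤ r / (T : ℝ) ^ α ∧ r / (T : ℝ) ^ α ≤ 1 := by
    intro T
    refine ⟨by positivity, ?_⟩
    rcases Nat.eq_zero_or_pos T with h | h
    · subst h
      by_cases ha : α = 0
      · simp [ha, hr1.le]
      · simp [Real.zero_rpow ha]
    · have h1 : (1 : ℝ) ≤ T := by exact_mod_cast h
      have h2 := Real.one_le_rpow h1 hα0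
      rw [div_le_one (by linarith)]
      linarith
  let v : NNReal := ⟨r, hr0.le⟩
  have hv : v ≠ 0 := fun h => hr0.ne' (congrArg NNReal.toReal h)
  let μ : ℕ → ProbabilityMeasure ℝ := fun T =>
    lazyPM (r / (T : ℝ) ^ α) (hT T).1 (hT T).2 T (Real.sqrt ((T : ℝ) ^ (1 - α)))
  let ν : ProbabilityMeasure ℝ := ⟨gaussianReal 0 v, inferInstance⟩
  have hconv : Tendsto μ atTop (𝓝 ν) := by
    refine ProbabilityMeasure.tendsto_iff_tendsto_charFun.2 fun t => ?_
    have hν : charFun (ν : Measure ℝ) t = ((Real.exp (-(r * t ^ 2 / 2)) : ℝ) : ℂ) := by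
      change charFun (gaussianReal 0 v) t = _
      rw [charFun_gaussianReal]
      have : ((v : ℝ) : ℂ) = r := rfl
      rw [this]
      push_cast
      congr 1
      ring
    rw [hν]
    simp only [μ, lazyPM_charFun]
    exact (Complex.continuous_ofReal.tendsto _).comp (charFun_limit r α t hα1)
  let G : BoundedContinuousFunction ℝ ℝ := BoundedContinuousFunction.ofNormedAddCommGroup g hg M hM
  have h := ProbabilityMeasure.tendsto_iff_forall_integral_tendsto.1 hconv G
  have hν : ∫ x, G x ∂(ν : Measure ℝ)
      = (1 / Real.sqrt (2 * π * r)) * ∫ x : ℝ, g x * Real.exp (-x ^ 2 / (2 * r)) := by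
    change ∫ x, g x ∂(gaussianReal 0 v) = _
    rw [integral_gaussianReal_eq_integral_smul hv, ← integral_const_mul]
    refine integral_congr_ae (.of_forall fun x => ?_)
    have : (v : ℝ) = r := rfl
    simp only [gaussianPDFReal, this, smul_eq_mul, sub_zero]
    ring
  rw [hν] at h
  refine h.congr fun T => ?_
  exact lazyPM_integral _ (hT T).1 (hT T).2 T _ g hg.stronglyMeasurable M hM
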